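/- Let Φ denote the cumulative distribution function of the standard normal distribution and, for ρ ∈ (−1,1) and r ∈ (0,1), define Γ_ρ(r) = ∫_{−∞}^{Φ^{−1}(r)} ∫_{−∞}^{Φ^{−1}(r)} (2π√(1−ρ²))^{−1} · exp(−(x² − 2ρxy + y²)/(2(1−ρ²))) dy dx, the probability that a mean-zero bivariate normal pair with unit variances and correlation ρ has both coordinates at most Φ^{−1}(r). Then for ρ = −0.52 one has (3 − ρ) · ∫_0^1 Γ_ρ(r) dr ≥ 1.015. -/

import Mathlib

open Real

/-- The cumulative distribution function of the standard normal distribution. -/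
noncomputable def stdNormalCDF (x : ℝ) : ℝ :=
  ∫ t in Set.Iic x, (Real.sqrt (2 * π))⁻¹ * Real.exp (-(t ^ 2) / 2)

/-- `Γ_ρ(r)`: the probability that a mean-zero bivariate normal pair with unit variances and
correlation `ρ` has both coordinates at most `Φ⁻¹(r)`, written as an explicit double
integral of the bivariate normal density. -/
noncomputable def GammaRho (ρ r : ℝ) : ℝ :=
  ∫ x in Set.Iic (Function.invFun stdNormalCDF r),
    ∫ y in Set.Iic (Function.invFun stdNormalCDF r),
      (2 * π * Real.sqrt (1 - ρ ^ 2))⁻¹ *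
        Real.exp (-((x ^ 2 - 2 * ρ * x * y + y ^ 2) / (2 * (1 - ρ ^ 2))))

/-!
Let `(X, Y)` be the bivariate normal pair and `T` an independent standard normal variable. The
substitution `r = Φ(t)` turns `∫₀¹ Γ_ρ(r) dr` into `P(X ≤ T, Y ≤ T)`, the probability that the
centred normal pair `(T - X, T - Y)`, whose correlation is `(1 + ρ) / 2`, lies in the positive
quadrant. By Sheppard's formula this is `1 / 4 + arcsin ((1 + ρ) / 2) / (2π)`; for `ρ = -0.52` it
remains to bound `arcsin 0.24` from below.
-/

open MeasureTheory ProbabilityTheory Filter Topology Set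
open scoped NNReal

section StandardNormalCDF

variable {E : Type*} [NormedAddCommGroup E] [NormedSpace ℝ E]

lemma hasDerivAt_integral_Iic [CompleteSpace E] {f : ℝ → E} {x : ℝ} (hf : Integrable f)
    (hx : ContinuousAt f x) : HasDerivAt (fun y ↦ ∫ t in Iic y, f t) (f x) x := by
  have h_split : (fun y ↦ ∫ t in Iic y, f t) = fun y ↦ (∫ t in Iic x, f t) + ∫ t in x..y, f t := by
    funext y
    rw [← intervalIntegral.integral_Iic_sub_Iic hf.integrableOn hf.integrableOn,
      add_sub_cancel]
  rw [h_split]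
  exact (intervalIntegral.integral_hasDerivAt_right hf.intervalIntegrable
    hf.aestronglyMeasurable.stronglyMeasurableAtFilter hx).const_add _

lemma stdNormalCDF_eq_integral_gaussianPDFReal :
    stdNormalCDF = fun x ↦ ∫ t in Iic x, gaussianPDFReal 0 1 t := by
  funext x
  simp [stdNormalCDF, gaussianPDFReal]

lemma stdNormalCDF_eq_cdf : stdNormalCDF = cdf (gaussianReal 0 1) := by
  funext x
  rw [cdf_eq_real, measureReal_def, gaussianReal_apply_eq_integral 0 one_ne_zero,
    ENNReal.toReal_ofReal (integral_nonneg (gaussianPDFReal_nonneg 0 1)),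
    stdNormalCDF_eq_integral_gaussianPDFReal]

lemma hasDerivAt_stdNormalCDF (x : ℝ) : HasDerivAt stdNormalCDF (gaussianPDFReal 0 1 x) x := by
  have h_cont : Continuous (gaussianPDFReal 0 1) := by unfold gaussianPDFReal; fun_prop
  rw [stdNormalCDF_eq_integral_gaussianPDFReal]
  exact hasDerivAt_integral_Iic (integrable_gaussianPDFReal 0 1) h_cont.continuousAt

lemma strictMono_stdNormalCDF : StrictMono stdNormalCDF :=
  strictMono_of_hasDerivAt_pos hasDerivAt_stdNormalCDF
    fun x ↦ gaussianPDFReal_pos 0 1 x one_ne_zero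

lemma range_stdNormalCDF : range stdNormalCDF = Ioo 0 1 := by
  have h_bot : Tendsto stdNormalCDF atBot (𝓝 0) := by
    rw [stdNormalCDF_eq_cdf]; exact tendsto_cdf_atBot _
  have h_top : Tendsto stdNormalCDF atTop (𝓝 1) := by
    rw [stdNormalCDF_eq_cdf]; exact tendsto_cdf_atTop _
  have h_cont : Continuous stdNormalCDF :=
    continuous_iff_continuousAt.2 fun x ↦ (hasDerivAt_stdNormalCDF x).continuousAt
  refine Subset.antisymm (range_subset_iff.2 fun x ↦ ⟨?_, ?_⟩) fun r hr ↦ ?_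
  · exact (strictMono_stdNormalCDF.monotone.le_of_tendsto h_bot (x - 1)).trans_lt
      (strictMono_stdNormalCDF (sub_one_lt x))
  · exact (strictMono_stdNormalCDF (lt_add_one x)).trans_le
      (strictMono_stdNormalCDF.monotone.ge_of_tendsto h_top (x + 1))
  · exact mem_range_of_exists_le_of_exists_ge h_cont
      (h_bot.eventually (ge_mem_nhds hr.1)).exists (h_top.eventually (le_mem_nhds hr.2)).exists

lemma integral_comp_invFun_stdNormalCDF (g : ℝ → E) :
    ∫ r in (0 : ℝ)..1, g (Function.invFun stdNormalCDF r) = ∫ t, gaussianPDFReal 0 1 t • g t := by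
  rw [intervalIntegral.integral_of_le zero_le_one, integral_Ioc_eq_integral_Ioo,
    ← range_stdNormalCDF, ← image_univ,
    integral_image_eq_integral_abs_deriv_smul MeasurableSet.univ
      (fun x _ ↦ (hasDerivAt_stdNormalCDF x).hasDerivWithinAt)
      strictMono_stdNormalCDF.injective.injOn, setIntegral_univ]
  simp only [Function.leftInverse_invFun strictMono_stdNormalCDF.injective _,
    abs_of_nonneg (gaussianPDFReal_nonneg 0 1 _)]

end StandardNormalCDF

section Translation

lemma setIntegral_Iic_eq_setIntegral_Ici_sub {G E : Type*} [AddCommGroup G] [PartialOrder G]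
    [IsOrderedAddMonoid G] [MeasurableSpace G] [MeasurableAdd G] [MeasurableNeg G]
    (μ : Measure G) [μ.IsAddLeftInvariant] [μ.IsNegInvariant] [NormedAddCommGroup E]
    [NormedSpace ℝ E] (f : G → E) (a : G) :
    ∫ x in Iic a, f x ∂μ = ∫ x in Ici 0, f (a - x) ∂μ := by
  have h_preimage : (a - ·) ⁻¹' Iic a = Ici 0 := by ext; simp
  rw [← h_preimage, (Measure.measurePreserving_sub_left μ a).setIntegral_preimage_emb
    (MeasurableEquiv.subLeft a).measurableEmbedding]

lemma integrable_prod_mul_comp_sub {α G : Type*} [MeasurableSpace α] [AddCommGroup G]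
    [MeasurableSpace G] [MeasurableAdd₂ G] [MeasurableNeg G] {μ : Measure α} [SFinite μ]
    {ν : Measure G} [SFinite ν] [ν.IsAddLeftInvariant] [ν.IsNegInvariant]
    {φ : α → ℝ} {f : G → ℝ} {g : α → G} (hφ : Integrable φ μ) (hf : Integrable f ν)
    (hg : Measurable g) : Integrable (fun z : α × G ↦ φ z.1 * f (g z.1 - z.2)) (μ.prod ν) := by
  have h_shear : MeasurePreserving (fun z : α × G ↦ (z.1, g z.1 - z.2)) (μ.prod ν) (μ.prod ν) :=
    (MeasurePreserving.id μ).skew_product (g := fun a x ↦ g a - x) (by fun_prop)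
      (ae_of_all _ fun a ↦ (Measure.measurePreserving_sub_left ν (g a)).map_eq)
  exact h_shear.integrable_comp_of_integrable (hφ.mul_prod hf)

end Translation

/-- The quadratic form `x² - 2ρxy + y²` in the exponent of the density of a bivariate normal pair
with equal variances and correlation `ρ`. -/
def corrForm (ρ x y : ℝ) : ℝ := x ^ 2 - 2 * ρ * x * y + y ^ 2

section OrthantIntegral

variable {ρ : ℝ}

lemma one_sub_sq_pos_of_abs_lt_one (hρ : |ρ| < 1) : 0 < 1 - ρ ^ 2 :=
  sub_pos.2 ((sq_lt_one_iff_abs_lt_one ρ).2 hρ)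

lemma one_sub_abs_mul_le_corrForm (ρ x y : ℝ) : (1 - |ρ|) * (x ^ 2 + y ^ 2) ≤ corrForm ρ x y := by
  unfold corrForm
  rcases abs_cases ρ with ⟨h, h_sign⟩ | ⟨h, h_sign⟩ <;> rw [h]
  · nlinarith [mul_nonneg h_sign (sq_nonneg (x - y))]
  · nlinarith [mul_nonneg (neg_nonneg.2 h_sign.le) (sq_nonneg (x + y))]

lemma corrForm_mul_right (ρ x s : ℝ) : corrForm ρ x (x * s) = corrForm ρ 1 s * x ^ 2 := by
  unfold corrForm; ring

lemma corrForm_one_left_pos (hρ : |ρ| < 1) (s : ℝ) : 0 < corrForm ρ 1 s :=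
  (mul_pos (sub_pos.2 hρ) (by positivity)).trans_le (one_sub_abs_mul_le_corrForm ρ 1 s)

lemma integrable_exp_neg_mul_corrForm {k : ℝ} (hk : 0 < k) (hρ : |ρ| < 1) :
    Integrable fun p : ℝ × ℝ ↦ exp (-(k * corrForm ρ p.1 p.2)) := by
  have hb : 0 < k * (1 - |ρ|) := mul_pos hk (sub_pos.2 hρ)
  refine ((integrable_exp_neg_mul_sq hb).mul_prod (integrable_exp_neg_mul_sq hb)).mono'
    (by unfold corrForm; fun_prop) (ae_of_all _ fun p ↦ ?_)
  rw [norm_of_nonneg (exp_pos _).le, ← exp_add, exp_le_exp]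
  linarith [mul_le_mul_of_nonneg_left (one_sub_abs_mul_le_corrForm ρ p.1 p.2) hk.le]

lemma integral_Ioi_mul_exp_neg_mul_sq {b : ℝ} (hb : 0 < b) :
    ∫ x in Ioi (0 : ℝ), x * exp (-b * x ^ 2) = (2 * b)⁻¹ := by
  have h := integral_rpow_mul_exp_neg_mul_rpow (p := 2) (q := 1) two_pos (by norm_num) hb
  simp only [rpow_one, rpow_two, one_add_one_eq_two, neg_div, div_self (two_ne_zero' ℝ),
    rpow_neg_one, Gamma_one, mul_one, one_div] at h
  rw [h, mul_inv, mul_comm]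

lemma integrable_inv_corrForm_one_left (hρ : |ρ| < 1) :
    Integrable fun s ↦ (corrForm ρ 1 s)⁻¹ := by
  refine (integrable_inv_one_add_sq.const_mul (1 - |ρ|)⁻¹).mono' ?_ (ae_of_all _ fun s ↦ ?_)
  · exact Measurable.aestronglyMeasurable (by unfold corrForm; fun_prop)
  · have h_pos := corrForm_one_left_pos hρ s
    rw [norm_of_nonneg (inv_nonneg.2 h_pos.le), ← mul_inv]
    refine inv_anti₀ (mul_pos (sub_pos.2 hρ) (by positivity)) ?_
    simpa using one_sub_abs_mul_le_corrForm ρ 1 s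

lemma integral_Ioi_inv_corrForm_one_left (hρ : |ρ| < 1) :
    ∫ s in Ioi (0 : ℝ), (corrForm ρ 1 s)⁻¹ = (π / 2 + arcsin ρ) / √(1 - ρ ^ 2) := by
  set d := √(1 - ρ ^ 2)
  have hd : 0 < d := sqrt_pos.2 (one_sub_sq_pos_of_abs_lt_one hρ)
  have hd_sq : d ^ 2 = 1 - ρ ^ 2 := sq_sqrt (one_sub_sq_pos_of_abs_lt_one hρ).le
  have h_deriv (s : ℝ) : HasDerivAt (fun s ↦ arctan ((s - ρ) / d) / d) (corrForm ρ 1 s)⁻¹ s := by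
    refine ((((hasDerivAt_id s).sub_const ρ).div_const d).arctan.div_const d).congr_deriv ?_
    have h_form : corrForm ρ 1 s = (s - ρ) ^ 2 + d ^ 2 := by rw [hd_sq, corrForm]; ring
    simp only [id, h_form]
    field_simp
    ring
  have h_top : Tendsto (fun s ↦ arctan ((s - ρ) / d) / d) atTop (𝓝 (π / 2 / d)) :=
    ((tendsto_nhds_of_tendsto_nhdsWithin tendsto_arctan_atTop).comp
      ((tendsto_atTop_add_const_right _ (-ρ) tendsto_id).atTop_div_const hd)).div_const d
  rw [integral_Ioi_of_hasDerivAt_of_tendsto' (fun s _ ↦ h_deriv s)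
    (integrable_inv_corrForm_one_left hρ).integrableOn h_top, zero_sub, neg_div, arctan_neg,
    ← arcsin_eq_arctan (abs_lt.1 hρ)]
  ring

lemma mul_exp_neg_mul_corrForm_mul_right (k ρ x s : ℝ) :
    x * exp (-(k * corrForm ρ x (x * s))) = x * exp (-(k * corrForm ρ 1 s) * x ^ 2) := by
  rw [corrForm_mul_right, neg_mul, mul_assoc]

lemma integrable_mul_exp_neg_mul_corrForm_mul_right {k : ℝ} (hk : 0 < k) (hρ : |ρ| < 1) :
    Integrable (Function.uncurry fun x s : ℝ ↦ x * exp (-(k * corrForm ρ x (x * s))))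
      ((volume.restrict (Ioi 0)).prod (volume.restrict (Ioi 0))) := by
  have hb (s : ℝ) : 0 < k * corrForm ρ 1 s := mul_pos hk (corrForm_one_left_pos hρ s)
  have h_cont : Continuous (Function.uncurry fun x s : ℝ ↦
      x * exp (-(k * corrForm ρ 1 s) * x ^ 2)) := by
    unfold corrForm Function.uncurry; fun_prop
  have h_norm (s : ℝ) : ∫ x in Ioi (0 : ℝ), ‖x * exp (-(k * corrForm ρ 1 s) * x ^ 2)‖ =
      (2 * k)⁻¹ * (corrForm ρ 1 s)⁻¹ := by
    rw [← mul_inv, mul_assoc, ← integral_Ioi_mul_exp_neg_mul_sq (hb s)]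
    exact setIntegral_congr_fun measurableSet_Ioi fun x (hx : 0 < x) ↦
      norm_of_nonneg (by positivity)
  simp only [mul_exp_neg_mul_corrForm_mul_right]
  refine (integrable_prod_iff' h_cont.aestronglyMeasurable).2
    ⟨ae_of_all _ fun s ↦ (integrable_mul_exp_neg_mul_sq (hb s)).restrict, ?_⟩
  simp only [Function.uncurry_apply_pair, h_norm]
  exact (integrable_inv_corrForm_one_left hρ).restrict.const_mul _

lemma integral_Ici_exp_neg_mul_corrForm {k : ℝ} (hk : 0 < k) (hρ : |ρ| < 1) :
    ∫ p in Ici (0 : ℝ × ℝ), exp (-(k * corrForm ρ p.1 p.2)) =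
      (π / 2 + arcsin ρ) / (2 * k * √(1 - ρ ^ 2)) := by
  calc ∫ p in Ici (0 : ℝ × ℝ), exp (-(k * corrForm ρ p.1 p.2))
      = ∫ x in Ioi (0 : ℝ), ∫ y in Ioi (0 : ℝ), exp (-(k * corrForm ρ x y)) := by
        have h_int := (integrable_exp_neg_mul_corrForm hk hρ).integrableOn
          (s := Ici (0 : ℝ) ×ˢ Ici 0)
        rw [Prod.zero_eq_mk, ← Ici_prod_Ici, Measure.volume_eq_prod, setIntegral_prod _ h_int]
        simp only [integral_Ici_eq_integral_Ioi]
    _ = ∫ x in Ioi (0 : ℝ), ∫ s in Ioi (0 : ℝ), x * exp (-(k * corrForm ρ x (x * s))) := by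
        refine setIntegral_congr_fun measurableSet_Ioi fun x hx ↦ ?_
        have h_subst := integral_comp_mul_left_Ioi' (fun y ↦ exp (-(k * corrForm ρ x y))) 0 hx
        rw [mul_zero, smul_eq_mul, ← integral_const_mul] at h_subst
        exact h_subst.symm
    _ = ∫ s in Ioi (0 : ℝ), ∫ x in Ioi (0 : ℝ), x * exp (-(k * corrForm ρ x (x * s))) :=
        integral_integral_swap (integrable_mul_exp_neg_mul_corrForm_mul_right hk hρ)
    _ = ∫ s in Ioi (0 : ℝ), (2 * k)⁻¹ * (corrForm ρ 1 s)⁻¹ := by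
        congr 1 with s
        simp only [mul_exp_neg_mul_corrForm_mul_right]
        rw [integral_Ioi_mul_exp_neg_mul_sq (mul_pos hk (corrForm_one_left_pos hρ s)),
          ← mul_assoc, mul_inv]
    _ = (π / 2 + arcsin ρ) / (2 * k * √(1 - ρ ^ 2)) := by
        rw [integral_const_mul, integral_Ioi_inv_corrForm_one_left hρ]
        field_simp

end OrthantIntegral

/-- The density at `(x, y)` of a mean-zero bivariate normal pair with common variance `v` and
correlation `ρ`. -/
noncomputable def bivariateNormalPDF (v ρ x y : ℝ) : ℝ :=
  (2 * π * v * √(1 - ρ ^ 2))⁻¹ * exp (-(corrForm ρ x y / (2 * v * (1 - ρ ^ 2))))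

section BivariateNormal

variable {v ρ : ℝ}

lemma integrable_bivariateNormalPDF (hv : 0 < v) (hρ : |ρ| < 1) :
    Integrable fun p : ℝ × ℝ ↦ bivariateNormalPDF v ρ p.1 p.2 := by
  have hk : 0 < (2 * v * (1 - ρ ^ 2))⁻¹ :=
    inv_pos.2 (mul_pos (by positivity) (one_sub_sq_pos_of_abs_lt_one hρ))
  simpa only [bivariateNormalPDF, div_eq_inv_mul] using
    (integrable_exp_neg_mul_corrForm hk hρ).const_mul _

/-- **Sheppard's formula** for the orthant probability. -/
lemma integral_Ici_bivariateNormalPDF (hv : 0 < v) (hρ : |ρ| < 1) :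
    ∫ p in Ici (0 : ℝ × ℝ), bivariateNormalPDF v ρ p.1 p.2 = 1 / 4 + arcsin ρ / (2 * π) := by
  have h_pos := one_sub_sq_pos_of_abs_lt_one hρ
  have hk : 0 < (2 * v * (1 - ρ ^ 2))⁻¹ := by positivity
  simp only [bivariateNormalPDF, div_eq_inv_mul (corrForm ρ _ _)]
  rw [integral_const_mul, integral_Ici_exp_neg_mul_corrForm hk hρ]
  have h_sqrt : √(1 - ρ ^ 2) ^ 2 = 1 - ρ ^ 2 := sq_sqrt h_pos.le
  field_simp
  rw [h_sqrt]
  field_simp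
  ring

lemma abs_mul_add_div_add_lt_one {w : ℝ} (hv : 0 < v) (hw : 0 ≤ w) (hρ : |ρ| < 1) :
    |(v * ρ + w) / (v + w)| < 1 := by
  obtain ⟨h_lower, h_upper⟩ := abs_lt.1 hρ
  rw [abs_lt, lt_div_iff₀ (by positivity), div_lt_one (by positivity)]
  constructor <;> nlinarith

lemma one_sub_sq_mul_add_div_add {w : ℝ} (h : v + w ≠ 0) (ρ : ℝ) :
    1 - ((v * ρ + w) / (v + w)) ^ 2 = v * (1 - ρ) * (v * (1 + ρ) + 2 * w) / (v + w) ^ 2 := by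
  field_simp
  ring

/-- If `(X, Y)` has density `bivariateNormalPDF v ρ` and `T` is an independent normal variable of
variance `w`, both sides are the density of `(T, T - X, T - Y)`: the right-hand side factors it into
the conditional density of `T` and the density of `(T - X, T - Y)`. -/
lemma gaussianPDFReal_mul_bivariateNormalPDF_sub {w τ : ℝ≥0} (hv : 0 < v) (hw : 0 < w)
    (hρ : |ρ| < 1) (hτ : (τ : ℝ) = w * v * (1 + ρ) / (v * (1 + ρ) + 2 * w)) (t x y : ℝ) :
    gaussianPDFReal 0 w t * bivariateNormalPDF v ρ (t - x) (t - y) =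
      gaussianPDFReal (w * (x + y) / (v * (1 + ρ) + 2 * w)) τ t *
        bivariateNormalPDF (v + w) ((v * ρ + w) / (v + w)) x y := by
  obtain ⟨h_lower, h_upper⟩ := abs_lt.1 hρ
  have hw' : (0 : ℝ) < w := hw
  have h_add : 0 < 1 + ρ := by linarith
  have h_sub : 0 < 1 - ρ := by linarith
  have h_factor : 1 - ρ ^ 2 = (1 - ρ) * (1 + ρ) := by ring
  have h_var := one_sub_sq_mul_add_div_add (add_pos hv hw').ne' ρ
  have h_exponent :
      -(t - 0) ^ 2 / (2 * w) + -(corrForm ρ (t - x) (t - y) / (2 * v * (1 - ρ ^ 2))) =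
        -(t - w * (x + y) / (v * (1 + ρ) + 2 * w)) ^ 2 / (2 * τ) +
          -(corrForm ((v * ρ + w) / (v + w)) x y /
            (2 * (v + w) * (1 - ((v * ρ + w) / (v + w)) ^ 2))) := by
    rw [h_var, h_factor, hτ]
    unfold corrForm
    field_simp
    ring
  have h_const : (√(2 * π * w))⁻¹ * (2 * π * v * √(1 - ρ ^ 2))⁻¹ =
      (√(2 * π * τ))⁻¹ * (2 * π * (v + w) * √(1 - ((v * ρ + w) / (v + w)) ^ 2))⁻¹ := by
    rw [h_var, h_factor, hτ, ← sq_eq_sq₀ (by positivity) (by positivity)]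
    simp only [mul_pow, inv_pow]
    rw [sq_sqrt (by positivity), sq_sqrt (by positivity), sq_sqrt (by positivity),
      sq_sqrt (by positivity)]
    field_simp
  simp only [gaussianPDFReal, bivariateNormalPDF]
  rw [mul_mul_mul_comm, mul_mul_mul_comm (√(2 * π * τ))⁻¹, ← exp_add, ← exp_add, h_exponent,
    h_const]

lemma integral_gaussianPDFReal_mul_bivariateNormalPDF_sub {w : ℝ≥0} (hv : 0 < v) (hw : 0 < w)
    (hρ : |ρ| < 1) (x y : ℝ) :
    ∫ t, gaussianPDFReal 0 w t * bivariateNormalPDF v ρ (t - x) (t - y) =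
      bivariateNormalPDF (v + w) ((v * ρ + w) / (v + w)) x y := by
  have h_add : 0 < 1 + ρ := by linarith [(abs_lt.1 hρ).1]
  have hτ : 0 < w * v * (1 + ρ) / (v * (1 + ρ) + 2 * w) := by positivity
  simp only [gaussianPDFReal_mul_bivariateNormalPDF_sub hv hw hρ (coe_toNNReal _ hτ.le)]
  rw [integral_mul_const, integral_gaussianPDFReal_eq_one _ (toNNReal_pos.2 hτ).ne', one_mul]

end BivariateNormal

lemma GammaRho_eq_setIntegral_Iic {ρ : ℝ} (hρ : |ρ| < 1) (r : ℝ) :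
    GammaRho ρ r = ∫ p in Iic (Function.invFun stdNormalCDF r, Function.invFun stdNormalCDF r),
      bivariateNormalPDF 1 ρ p.1 p.2 := by
  rw [← Iic_prod_Iic, Measure.volume_eq_prod,
    setIntegral_prod _ (integrable_bivariateNormalPDF one_pos hρ).integrableOn]
  simp only [GammaRho, bivariateNormalPDF, corrForm, mul_one]

theorem integral_GammaRho {ρ : ℝ} (hρ : |ρ| < 1) :
    ∫ r in (0 : ℝ)..1, GammaRho ρ r = 1 / 4 + arcsin ((1 + ρ) / 2) / (2 * π) := by
  set φ := gaussianPDFReal 0 1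
  set f := fun p : ℝ × ℝ ↦ bivariateNormalPDF 1 ρ p.1 p.2
  have hf : Integrable f := integrable_bivariateNormalPDF one_pos hρ
  have h_int : Integrable (Function.uncurry fun (t : ℝ) (p : ℝ × ℝ) ↦ φ t * f ((t, t) - p))
      (volume.prod (volume.restrict (Ici 0))) := by
    have h := (integrable_prod_mul_comp_sub (g := fun t : ℝ ↦ (t, t))
      (integrable_gaussianPDFReal 0 1) hf (by fun_prop)).restrict (s := univ ×ˢ Ici 0)
    rwa [← Measure.prod_restrict, Measure.restrict_univ] at h
  calc ∫ r in (0 : ℝ)..1, GammaRho ρ r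
      = ∫ t, φ t * ∫ p in Ici (0 : ℝ × ℝ), f ((t, t) - p) := by
        simp only [GammaRho_eq_setIntegral_Iic hρ, setIntegral_Iic_eq_setIntegral_Ici_sub volume]
        exact integral_comp_invFun_stdNormalCDF fun t ↦ ∫ p in Ici (0 : ℝ × ℝ), f ((t, t) - p)
    _ = ∫ p in Ici (0 : ℝ × ℝ), ∫ t, φ t * f ((t, t) - p) := by
        simp only [← integral_const_mul]
        exact integral_integral_swap h_int
    _ = ∫ p in Ici (0 : ℝ × ℝ), bivariateNormalPDF 2 ((1 + ρ) / 2) p.1 p.2 := by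
        congr 1 with p
        have h := integral_gaussianPDFReal_mul_bivariateNormalPDF_sub one_pos one_pos hρ p.1 p.2
        simp only [NNReal.coe_one, one_mul, one_add_one_eq_two, add_comm ρ] at h
        exact h
    _ = 1 / 4 + arcsin ((1 + ρ) / 2) / (2 * π) := by
        refine integral_Ici_bivariateNormalPDF two_pos ?_
        simpa only [one_mul, one_add_one_eq_two, add_comm ρ] using
          abs_mul_add_div_add_lt_one one_pos zero_le_one hρ

lemma arcsin_024_ge : 0.241 ≤ arcsin 0.24 := by
  rw [le_arcsin_iff_sin_le' (by constructor <;> linarith [pi_gt_three])]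
  have h_sin := (abs_le.1 (sin_bound (x := 0.241) (by norm_num [abs_of_pos]))).2
  rw [abs_of_pos (by norm_num)] at h_sin
  norm_num at h_sin ⊢
  linarith

/-- For `ρ = −0.52` one has `(3 − ρ) · ∫_0^1 Γ_ρ(r) dr ≥ 1.015`. -/
theorem inapproximability_ratio_bound :
    (1.015 : ℝ) ≤ (3 - (-0.52)) * ∫ r in (0 : ℝ)..1, GammaRho (-0.52) r := by
  have hρ : |(-0.52 : ℝ)| < 1 := by norm_num [abs_of_pos]
  rw [integral_GammaRho hρ, show (1 + -0.52 : ℝ) / 2 = 0.24 by norm_num]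
  have h_arcsin : 0.135 / 3.52 ≤ arcsin 0.24 / (2 * π) := by
    rw [le_div_iff₀ (by positivity)]
    linarith [arcsin_024_ge, pi_lt_d6]
  linarith
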